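/- Let p ∈ [1,2]. There exists a sequence (x^{(j)})_{j≥1} in ℓ_p(ℂ) such that the series ∑_j x^{(j)} is unconditionally summable (the family is summable) and ∑_{j=1}^∞ ‖x^{(j)}‖_p^{2−ε} = ∞ for every ε > 0. -/

import Mathlib

open scoped ENNReal

theorem aux_dft (N : ℕ) (hN : N ≠ 0) : ∃ ζ : ℂ, ‖ζ‖ = 1 ∧
    ∀ S : Finset ℕ, (∀ j ∈ S, j < N) →
      ∑ k ∈ Finset.range N, ‖∑ j ∈ S, ζ ^ (j * k)‖ ^ 2 = (N : ℝ) * S.card := by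
  have hζ := Complex.isPrimitiveRoot_exp N hN
  set ζ := Complex.exp (2 * Real.pi * Complex.I / N) with hdef
  have h1 : ‖ζ‖ = 1 := hζ.norm'_eq_one hN
  refine ⟨ζ, h1, fun S hS => ?_⟩
  have hc : ζ * (starRingEnd ℂ) ζ = 1 := by
    rw [Complex.mul_conj, Complex.normSq_eq_norm_sq, h1]; simp
  have hc0 : (starRingEnd ℂ) ζ ^ N = 1 := by
    rw [← map_pow, hζ.pow_eq_one, map_one]
  have orth : ∀ i < N, ∀ j < N, ∑ k ∈ Finset.range N, ζ ^ (i * k) * (starRingEnd ℂ) ζ ^ (j * k)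
      = if i = j then (N : ℂ) else 0 := by
    intro i hi j hj
    have e : ∀ k, ζ ^ (i * k) * (starRingEnd ℂ) ζ ^ (j * k) =
        (ζ ^ i * (starRingEnd ℂ) ζ ^ j) ^ k := by
      intro k; rw [pow_mul, pow_mul, mul_pow]
    simp only [e]
    split_ifs with hij
    · subst hij
      rw [← mul_pow, hc]; simp
    · have hr : ζ ^ i * (starRingEnd ℂ) ζ ^ j ≠ 1 := by
        intro h
        apply hij
        apply hζ.pow_inj hi hj
        have : ζ ^ i * (ζ * (starRingEnd ℂ) ζ) ^ j = ζ ^ j := by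
          rw [mul_pow]
          calc ζ ^ i * (ζ ^ j * (starRingEnd ℂ) ζ ^ j)
              = ζ ^ j * (ζ ^ i * (starRingEnd ℂ) ζ ^ j) := by ring
            _ = ζ ^ j := by rw [h, mul_one]
        simpa [hc] using this
      rw [geom_sum_eq hr, mul_pow, ← pow_mul, ← pow_mul, mul_comm i, mul_comm j, pow_mul, pow_mul,
        hζ.pow_eq_one, hc0]
      simp
  have : ((∑ k ∈ Finset.range N, ‖∑ j ∈ S, ζ ^ (j * k)‖ ^ 2 : ℝ) : ℂ) = (N : ℂ) * S.card := by
    push_cast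
    simp only [← Complex.mul_conj', map_sum, map_pow, Finset.sum_mul_sum]
    rw [Finset.sum_comm]
    calc _ = ∑ i ∈ S, ∑ j ∈ S, (if i = j then (N : ℂ) else 0) := by
          refine Finset.sum_congr rfl fun i hi => ?_
          rw [Finset.sum_comm]
          exact Finset.sum_congr rfl fun j hj => orth i (hS i hi) j (hS j hj)
      _ = _ := by
          rw [Finset.sum_congr rfl (g := fun _ => (N : ℂ))]
          · simp [mul_comm]
          · intro i hi; simp [hi]
  exact_mod_cast this

theorem aux_block (p : ℝ≥0∞) [Fact (1 ≤ p)] (hp2 : p ≤ 2) (N : ℕ) (hN : N ≠ 0) :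
    ∃ v : Fin N → lp (fun _ : ℕ => ℂ) p,
      (∀ j, ‖v j‖ = (N : ℝ) ^ (-(1/2) : ℝ)) ∧
      ∀ S : Finset (Fin N), ‖∑ j ∈ S, v j‖ ≤ 1 := by
  obtain ⟨ζ, h1, hζ⟩ := aux_dft N hN
  have hp1 : 1 ≤ p := Fact.out
  have hpt : p ≠ ⊤ := ne_top_of_le_ne_top (by simp) hp2
  have hq1 : 1 ≤ p.toReal := by
    simpa using ENNReal.toReal_mono hpt hp1
  have hq2 : p.toReal ≤ 2 := by
    simpa using ENNReal.toReal_mono (by simp) hp2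
  have hq0 : 0 < p.toReal := by linarith
  have hN0 : (0 : ℝ) < N := by positivity
  set q := p.toReal with hq
  set a : ℝ := (N : ℝ) ^ (-(1/2) - 1/q : ℝ) with ha
  have ha0 : 0 < a := by positivity
  refine ⟨fun j => ∑ k ∈ Finset.range N,
    lp.single p k ((a : ℂ) * ζ ^ ((j : ℕ) * k)), ?_, ?_⟩
  · intro j
    have h := lp.norm_sum_single (E := fun _ : ℕ => ℂ) hq0
      (fun k => (a : ℂ) * ζ ^ ((j : ℕ) * k)) (Finset.range N)
    rw [← Real.rpow_left_inj (norm_nonneg _) (by positivity) hq0.ne', h]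
    simp only [norm_mul, norm_pow, h1, one_pow, mul_one, Complex.norm_real, Real.norm_eq_abs,
      abs_of_pos ha0, Finset.sum_const, Finset.card_range, nsmul_eq_mul]
    rw [ha, ← Real.rpow_mul hN0.le, ← Real.rpow_mul hN0.le]
    nth_rewrite 1 [← Real.rpow_one (N : ℝ)]
    rw [← Real.rpow_add hN0]
    congr 1
    field_simp
    ring
  · intro S
    have e : ∑ j ∈ S, ∑ k ∈ Finset.range N,
        lp.single (E := fun _ : ℕ => ℂ) p k ((a : ℂ) * ζ ^ ((j : ℕ) * k)) =
        ∑ k ∈ Finset.range N, lp.single (E := fun _ : ℕ => ℂ) p k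
          ((a : ℂ) * ∑ j ∈ S.map Fin.valEmbedding, ζ ^ (j * k)) := by
      rw [Finset.sum_comm]
      refine Finset.sum_congr rfl fun k _ => ?_
      rw [Finset.sum_map, Finset.mul_sum]
      exact (map_sum (lp.singleAddMonoidHom (E := fun _ : ℕ => ℂ) p k) _ _).symm
    rw [e]
    have h := lp.norm_sum_single (E := fun _ : ℕ => ℂ) hq0
      (fun k => (a : ℂ) * ∑ j ∈ S.map Fin.valEmbedding, ζ ^ (j * k)) (Finset.range N)
    set X := ∑ k ∈ Finset.range N, lp.single (E := fun _ : ℕ => ℂ) p k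
          ((a : ℂ) * ∑ j ∈ S.map Fin.valEmbedding, ζ ^ (j * k)) with hX
    have hz := hζ (S.map Fin.valEmbedding) (by simp)
    rw [Finset.card_map] at hz
    have hS : (S.card : ℝ) ≤ N := by
      have := S.card_le_univ
      rw [Fintype.card_fin] at this
      exact_mod_cast this
    have hpm := Real.rpow_sum_le_const_mul_sum_rpow_of_nonneg (Finset.range N)
      (f := fun k => ‖(a : ℂ) * ∑ j ∈ S.map Fin.valEmbedding, ζ ^ (j * k)‖ ^ q) (p := 2 / q)
      (by rw [le_div_iff₀ hq0]; linarith) (fun i _ => by positivity)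
    rw [← hq] at h
    rw [← h, ← Real.rpow_mul (norm_nonneg _), mul_div_cancel₀ _ hq0.ne', Finset.card_range] at hpm
    have hsq : ∀ z : ℂ, (‖z‖ ^ q) ^ (2 / q) = ‖z‖ ^ 2 := fun z => by
      rw [← Real.rpow_mul (norm_nonneg _), mul_div_cancel₀ _ hq0.ne', Real.rpow_two]
    simp only [hsq, Real.rpow_two] at hpm
    simp only [norm_mul, mul_pow, ← Finset.mul_sum, hz, Complex.norm_real, Real.norm_eq_abs,
      abs_of_pos ha0] at hpm
    have hfin : (N : ℝ) ^ (2 / q - 1) * (a ^ 2 * (N * N)) = 1 := by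
      have : (N : ℝ) * N = (N : ℝ) ^ (2 : ℝ) := by rw [Real.rpow_two, sq]
      rw [this, ha, ← Real.rpow_two, ← Real.rpow_mul hN0.le, ← Real.rpow_add hN0,
        ← Real.rpow_add hN0]
      convert Real.rpow_zero (N : ℝ) using 2
      field_simp
      ring
    have : ‖X‖ ^ 2 ≤ 1 := by
      refine hpm.trans (le_trans ?_ hfin.le)
      gcongr
    nlinarith [norm_nonneg X]

theorem exists_summable_not_rpow_summable_complex
    (p : ℝ≥0∞) [Fact (1 ≤ p)] (hp2 : p ≤ 2) :
    ∃ x : ℕ → lp (fun _ : ℕ => ℂ) p,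
      Summable x ∧ ∀ ε : ℝ, 0 < ε → ¬ Summable (fun j : ℕ => ‖x j‖ ^ (2 - ε)) := by
  choose v hv1 hv2 using fun n : ℕ => aux_block p hp2 (4 ^ (n ^ 2)) (by positivity)
  let I := Σ n : ℕ, Fin (4 ^ (n ^ 2))
  haveI : Infinite I := Infinite.of_injective
    (fun n : ℕ => (⟨n, ⟨0, by positivity⟩⟩ : I)) (fun a b h => congrArg Sigma.fst h)
  obtain ⟨e⟩ : Nonempty (ℕ ≃ I) := by
    haveI := Classical.choice (nonempty_denumerable I)
    exact ⟨(Denumerable.eqv I).symm⟩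
  let y : I → lp (fun _ : ℕ => ℂ) p := fun i => ((1 / 2 : ℝ) ^ i.1 : ℝ) • v i.1 i.2
  have hy : Summable y := by
    rw [summable_iff_vanishing_norm]
    intro ε hε
    obtain ⟨s, hs⟩ := summable_iff_vanishing_norm.1 summable_geometric_two ε hε
    refine ⟨s.sigma fun _ => Finset.univ, fun t ht => ?_⟩
    have hd : Disjoint (t.image Sigma.fst) s := by
      rw [Finset.disjoint_left] at ht ⊢
      intro n hn hns
      obtain ⟨i, hi, rfl⟩ := Finset.mem_image.1 hn
      exact ht hi (Finset.mem_sigma.2 ⟨hns, Finset.mem_univ _⟩)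
    refine lt_of_le_of_lt ?_ (hs _ hd)
    rw [← Finset.sum_fiberwise_of_maps_to (g := Sigma.fst) (t := t.image Sigma.fst)
      (fun i hi => Finset.mem_image_of_mem _ hi)]
    rw [Real.norm_of_nonneg (Finset.sum_nonneg fun _ _ => by positivity)]
    refine norm_sum_le_of_le _ fun n _ => ?_
    have key : ∑ i ∈ t with i.1 = n, y i =
        ((1 / 2 : ℝ) ^ n : ℝ) • ∑ j ∈ Finset.univ.filter (fun j => (⟨n, j⟩ : I) ∈ t), v n j := by
      rw [Finset.smul_sum]
      symm
      refine Finset.sum_bij (fun j _ => (⟨n, j⟩ : I)) ?_ ?_ ?_ ?_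
      · intro j hj; simpa using hj
      · intro j _ k _ h; exact eq_of_heq (Sigma.mk.inj h).2
      · rintro ⟨m, j⟩ hj
        obtain ⟨h1, h2⟩ := Finset.mem_filter.1 hj
        dsimp only at h2
        subst h2
        exact ⟨j, by simpa using h1, rfl⟩
      · intro j _; rfl
    rw [key, norm_smul, Real.norm_of_nonneg (by positivity)]
    exact mul_le_of_le_one_right (by positivity) (hv2 n _)
  refine ⟨y ∘ e, e.summable_iff.2 hy, fun ε hε hsum => ?_⟩
  have hsum' : Summable (fun i : I => ‖y i‖ ^ (2 - ε)) :=
    (e.summable_iff (f := fun i : I => ‖y i‖ ^ (2 - ε))).1 hsum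
  have ht := hsum'.sigma.tendsto_atTop_zero
  have hev := ht.eventually (gt_mem_nhds one_pos)
  obtain ⟨n, hn1, hn2⟩ := (hev.and (Filter.eventually_ge_atTop ⌈2 / ε⌉₊)).exists
  refine absurd hn1 (not_lt.2 ?_)
  have hn3 : 2 ≤ ε * n := by
    have := Nat.ceil_le.1 hn2
    rw [div_le_iff₀ hε] at this
    linarith
  have hny : ∀ c, ‖y ⟨n, c⟩‖ = (2 : ℝ) ^ (-(n : ℝ) - (n : ℝ) ^ 2) := by
    intro c
    have h4 : (((4 ^ (n ^ 2) : ℕ) : ℝ)) = (2 : ℝ) ^ (2 * (n : ℝ) ^ 2) := by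
      rw [Real.rpow_mul (by norm_num)]
      push_cast
      rw [← Nat.cast_pow, Real.rpow_natCast]
      norm_num
    have h2 : ((1 / 2 : ℝ) ^ n) = (2 : ℝ) ^ (-(n : ℝ)) := by
      rw [Real.rpow_neg (by norm_num), Real.rpow_natCast]; simp
    change ‖((1 / 2 : ℝ) ^ n : ℝ) • v n c‖ = _
    rw [norm_smul, Real.norm_of_nonneg (by positivity), hv1, h4, h2,
      ← Real.rpow_mul (by norm_num), ← Real.rpow_add (by norm_num)]
    congr 1
    ring
  simp only [hny]
  rw [tsum_fintype, Finset.sum_const, Finset.card_univ, Fintype.card_fin, nsmul_eq_mul]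
  have h4 : (((4 ^ (n ^ 2) : ℕ) : ℝ)) = (2 : ℝ) ^ (2 * (n : ℝ) ^ 2) := by
    rw [Real.rpow_mul (by norm_num)]
    push_cast
    rw [← Nat.cast_pow, Real.rpow_natCast]
    norm_num
  rw [h4, ← Real.rpow_mul (by norm_num), ← Real.rpow_add (by norm_num)]
  apply Real.one_le_rpow (by norm_num)
  have hn0 : (0 : ℝ) ≤ n := by positivity
  nlinarith [mul_nonneg hn0 (sub_nonneg.2 hn3), mul_nonneg hn0 hε.le]
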